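/- There exist ternary operations p_0,p_1,p_2,p_3 on {0,1,2}, each preserving C_3 and B_n for every n ≥ 2, satisfying the quasi Hagemann–Mitschke condition QHM(3); and there do NOT exist ternary operations p_0,p_1,p_2,p_3 on {0,1,2}, each preserving C_3, ≤_2, and B_2, satisfying QHM(3). -/

import Mathlib

/-- The three-element domain `{0,1,2}`. -/
abbrev D3 : Type := Fin 3

/-- `n`-ary operations on `{0,1,2}`. -/
abbrev Op (n : ℕ) : Type := (Fin n → D3) → D3

/-- An `n`-ary operation `f` preserves a `k`-ary relation `R`. -/
def Preserves {n k : ℕ} (f : Op n) (R : Set (Fin k → D3)) : Prop :=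
  ∀ t : Fin n → (Fin k → D3), (∀ i, t i ∈ R) → (fun j => f fun i => t i j) ∈ R

/-- `C₃ = {(0,1),(1,2),(2,0)}`. -/
def C3rel : Set (Fin 2 → D3) :=
  { t | (t 0 = 0 ∧ t 1 = 1) ∨ (t 0 = 1 ∧ t 1 = 2) ∨ (t 0 = 2 ∧ t 1 = 0) }

/-- `≤₂ = {(0,0),(0,1),(1,1)}`. -/
def le2rel : Set (Fin 2 → D3) :=
  { t | (t 0 = 0 ∧ t 1 = 0) ∨ (t 0 = 0 ∧ t 1 = 1) ∨ (t 0 = 1 ∧ t 1 = 1) }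

/-- `B_k = {0,1}^k \ {(0,…,0)}`. -/
def BnRel (k : ℕ) : Set (Fin k → D3) :=
  { t | (∀ i, t i = 0 ∨ t i = 1) ∧ ¬ ∀ i, t i = 0 }

/-- The quasi Hagemann–Mitschke condition `QHM(3)` for ternary operations `p₀,p₁,p₂,p₃`. -/
def QHM3 (p0 p1 p2 p3 : Op 3) : Prop :=
  (∀ x y z : D3, p0 ![x, y, z] = p0 ![x, x, x]) ∧
  (∀ x y z : D3, p3 ![x, y, z] = p3 ![z, z, z]) ∧
  (∀ x y : D3, p0 ![x, x, y] = p1 ![x, y, y] ∧ p1 ![x, x, y] = p2 ![x, y, y] ∧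
    p2 ![x, x, y] = p3 ![x, y, y])

/-- Preserving `C₃` and `B_k` for every `k ≥ 2`. -/
def PresBinf (f : Op 3) : Prop :=
  Preserves f C3rel ∧ ∀ k, 2 ≤ k → Preserves f (BnRel k)

/-- Preserving `C₃`, `≤₂` and `B₂`. -/
def PresM2 (f : Op 3) : Prop :=
  Preserves f C3rel ∧ Preserves f le2rel ∧ Preserves f (BnRel 2)

/-!
Preserving `C₃` means commuting with the cyclic shift `x ↦ x + 1`.

In `B_∞`, let `winner x y` be the later of `x`, `y` in the cyclic order `0 → 1 → 2 → 0`; on `{0,1}`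
it is the maximum. An operation which on `{0,1}` dominates some projection preserves every `B_k`, so
the chain `x`, `if x = y then winner x z else x`, `if y = z then winner x z else z`, `z` witnesses
`QHM(3)`. Repeating the last operation gives `QHM(n)` for all `n ≥ 3`.

An operation preserving `C₃` and `≤₂` fixes the constants `0` and `1`, since `(0,1)` is the only
pair in both relations. Along a quasi Hagemann–Mitschke chain, `p i (0,0,1) = 0` propagates:
`p (i+1) (0,1,1) = 0`, hence `p (i+1) (0,0,1) = 0` by `≤₂`. At the end of the chain the same value
is `p n (1,1,1) = 1`. So such operations satisfy no `QHM(n)` at all.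
-/

section Preservation

variable {n : ℕ} {f : Op n}

theorem preserves_binary_iff {R : Set (Fin 2 → D3)} :
    Preserves f R ↔ ∀ a b : Fin n → D3, (∀ i, ![a i, b i] ∈ R) → ![f a, f b] ∈ R := by
  have mem_iff (t : Fin 2 → D3) : t ∈ R ↔ ![t 0, t 1] ∈ R := by
    rw [show ![t 0, t 1] = t from FinVec.etaExpand_eq t]
  exact ⟨fun hf a b hab => (mem_iff _).1 (hf (fun i => ![a i, b i]) hab),
    fun hf t ht => (mem_iff _).2 (hf _ _ fun i => (mem_iff _).1 (ht i))⟩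

theorem vec_mem_C3rel_iff {x y : D3} : ![x, y] ∈ C3rel ↔ y = x + 1 := by
  change (x = 0 ∧ y = 1) ∨ (x = 1 ∧ y = 2) ∨ (x = 2 ∧ y = 0) ↔ y = x + 1
  decide +revert

theorem vec_mem_le2rel_iff {x y : D3} : ![x, y] ∈ le2rel ↔ x ≤ y ∧ y ≤ 1 := by
  change (x = 0 ∧ y = 0) ∨ (x = 0 ∧ y = 1) ∨ (x = 1 ∧ y = 1) ↔ x ≤ y ∧ y ≤ 1
  decide +revert

theorem mem_BnRel_iff {k : ℕ} {t : Fin k → D3} : t ∈ BnRel k ↔ t ≤ 1 ∧ t ≠ 0 := by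
  have le_one_iff (x : D3) : x = 0 ∨ x = 1 ↔ x ≤ 1 := by decide +revert
  simp only [BnRel, Set.mem_ofPred_eq, le_one_iff, Pi.le_def, Pi.one_apply, ne_eq, funext_iff,
    Pi.zero_apply]

theorem preserves_C3rel_iff : Preserves f C3rel ↔ ∀ v, f (v + 1) = f v + 1 := by
  simp only [preserves_binary_iff, vec_mem_C3rel_iff]
  refine ⟨fun hf v => hf v (v + 1) fun _ => rfl, fun hf a b hab => ?_⟩
  rw [show b = a + 1 from funext hab, hf]

theorem preserves_le2rel_iff :
    Preserves f le2rel ↔ ∀ a b, a ≤ b → b ≤ 1 → f a ≤ f b ∧ f b ≤ 1 := by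
  simp only [preserves_binary_iff, vec_mem_le2rel_iff, forall_and, and_imp, Pi.le_def,
    Pi.one_apply]

theorem preserves_BnRel_of_proj_le (i : Fin n) (hf : ∀ v ≤ 1, v i ≤ f v ∧ f v ≤ 1) (k : ℕ) :
    Preserves f (BnRel k) := by
  intro t ht
  simp only [mem_BnRel_iff] at ht ⊢
  have column_le (j : Fin k) : (fun i => t i j) ≤ 1 := fun i => (ht i).1 j
  refine ⟨fun j => (hf _ (column_le j)).2, fun h => (ht i).2 (funext fun j => ?_)⟩
  exact Fin.le_zero_iff.1 ((hf _ (column_le j)).1.trans_eq (congrFun h j))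

theorem map_zero_of_preserves (hC : Preserves f C3rel) (hle : Preserves f le2rel) : f 0 = 0 := by
  have succ_le_one : f 0 + 1 ≤ 1 := by
    rw [← preserves_C3rel_iff.1 hC, zero_add]
    exact (preserves_le2rel_iff.1 hle 1 1 le_rfl le_rfl).2
  have le_one : f 0 ≤ 1 :=
    (preserves_le2rel_iff.1 hle 0 0 le_rfl (fun _ => zero_le_one)).2
  generalize f 0 = x at *
  decide +revert

theorem map_one_of_preserves (hC : Preserves f C3rel) (hle : Preserves f le2rel) : f 1 = 1 := by
  simpa [map_zero_of_preserves hC hle] using preserves_C3rel_iff.1 hC 0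

end Preservation

/-- The quasi Hagemann–Mitschke condition `QHM(n)` for a chain `p 0, …, p n` of ternary
operations. -/
def QHM {n : ℕ} (p : Fin (n + 1) → Op 3) : Prop :=
  (∀ x y z, p 0 ![x, y, z] = p 0 ![x, x, x]) ∧
  (∀ x y z, p (Fin.last n) ![x, y, z] = p (Fin.last n) ![z, z, z]) ∧
  ∀ (i : Fin n) (x y), p i.castSucc ![x, x, y] = p i.succ ![x, y, y]

/-- The class `P` of ternary operations satisfies `QHM(n)`: it contains a quasi Hagemann–Mitschke
chain of length `n`. -/
def HasQHM (P : Op 3 → Prop) (n : ℕ) : Prop :=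
  ∃ p : Fin (n + 1) → Op 3, (∀ i, P (p i)) ∧ QHM p

section Chains

variable {P Q : Op 3 → Prop}

theorem qhm_iff_qhm3 {p0 p1 p2 p3 : Op 3} : QHM ![p0, p1, p2, p3] ↔ QHM3 p0 p1 p2 p3 := by
  have step_iff : (∀ (i : Fin 3) (x y : D3),
      ![p0, p1, p2, p3] i.castSucc ![x, x, y] = ![p0, p1, p2, p3] i.succ ![x, y, y]) ↔
      ∀ x y, p0 ![x, x, y] = p1 ![x, y, y] ∧ p1 ![x, x, y] = p2 ![x, y, y] ∧
        p2 ![x, x, y] = p3 ![x, y, y] := by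
    simp only [forall_and]
    exact Fin.forall_fin_succ.trans (and_congr_right' Fin.forall_fin_two)
  exact and_congr_right' (and_congr_right' step_iff)

theorem hasQHM_three_iff :
    HasQHM P 3 ↔ ∃ p0 p1 p2 p3, P p0 ∧ P p1 ∧ P p2 ∧ P p3 ∧ QHM3 p0 p1 p2 p3 := by
  simp [HasQHM, Fin.exists_fin_succ_pi, Fin.forall_fin_succ, ← qhm_iff_qhm3, and_assoc]

theorem HasQHM.imp {n : ℕ} (hPQ : ∀ f, P f → Q f) : HasQHM P n → HasQHM Q n :=
  fun ⟨p, hp, h⟩ => ⟨p, fun i => hPQ _ (hp i), h⟩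

theorem HasQHM.succ {n : ℕ} : HasQHM P n → HasQHM P (n + 1) := by
  rintro ⟨p, hp, first_eq, last_eq, step⟩
  refine ⟨Fin.snoc (α := fun _ => Op 3) p (p (Fin.last n)), fun i => ?_, ?_, ?_, fun i => ?_⟩
  · cases i using Fin.lastCases <;> simp only [Fin.snoc_last, Fin.snoc_castSucc, hp]
  · rwa [← Fin.castSucc_zero, Fin.snoc_castSucc]
  · rwa [Fin.snoc_last]
  · cases i using Fin.lastCases with
    | last =>
      intro x y
      rw [Fin.succ_last, Fin.snoc_castSucc, Fin.snoc_last, last_eq, last_eq x y y]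
    | cast i => simpa only [Fin.succ_castSucc, Fin.snoc_castSucc] using step i

theorem HasQHM.monotone : Monotone (HasQHM P) :=
  monotone_nat_of_le_succ fun _ => HasQHM.succ

end Chains

/-- The rock-paper-scissors operation on `{0,1,2}`, in which `x + 1` beats `x`. -/
def winner (x y : D3) : D3 := if y = x + 1 then y else x

/-- The operation `p₁` of the `QHM(3)` chain in `B_∞`. -/
def leftWinner : Op 3 := fun v => if v 0 = v 1 then winner (v 0) (v 2) else v 0

/-- The operation `p₂` of the `QHM(3)` chain in `B_∞`. -/
def rightWinner : Op 3 := fun v => if v 1 = v 2 then winner (v 0) (v 2) else v 2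

theorem winner_self (x : D3) : winner x x = x := ite_self x

theorem winner_add_one (x y : D3) : winner (x + 1) (y + 1) = winner x y + 1 := by
  decide +revert

theorem winner_eq_max {x y : D3} (hx : x ≤ 1) (hy : y ≤ 1) : winner x y = max x y := by
  decide +revert

theorem presBinf_of_proj_le {f : Op 3} (i : Fin 3) (hC : ∀ v, f (v + 1) = f v + 1)
    (hB : ∀ v ≤ 1, v i ≤ f v ∧ f v ≤ 1) : PresBinf f :=
  ⟨preserves_C3rel_iff.2 hC, fun k _ => preserves_BnRel_of_proj_le i hB k⟩

theorem presBinf_proj (i : Fin 3) : PresBinf fun v => v i :=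
  presBinf_of_proj_le i (fun _ => rfl) fun _ hv => ⟨le_rfl, hv i⟩

theorem presBinf_leftWinner : PresBinf leftWinner := by
  refine presBinf_of_proj_le 0 (fun v => ?_) fun v hv => ?_
  · simp [leftWinner, winner_add_one, apply_ite (· + (1 : D3))]
  · rw [leftWinner, winner_eq_max (hv 0) (hv 2)]
    split_ifs
    · exact ⟨le_max_left _ _, max_le (hv 0) (hv 2)⟩
    · exact ⟨le_rfl, hv 0⟩

theorem presBinf_rightWinner : PresBinf rightWinner := by
  refine presBinf_of_proj_le 2 (fun v => ?_) fun v hv => ?_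
  · simp [rightWinner, winner_add_one, apply_ite (· + (1 : D3))]
  · rw [rightWinner, winner_eq_max (hv 0) (hv 2)]
    split_ifs
    · exact ⟨le_max_right _ _, max_le (hv 0) (hv 2)⟩
    · exact ⟨le_rfl, hv 2⟩

theorem qhm3_winner : QHM3 (fun v => v 0) leftWinner rightWinner (fun v => v 2) := by
  refine ⟨fun _ _ _ => rfl, fun _ _ _ => rfl, fun x y => ⟨?_, ?_, ?_⟩⟩
  · by_cases h : x = y <;> simp [leftWinner, h, winner_self]
  · simp [leftWinner, rightWinner]
  · by_cases h : x = y <;> simp [rightWinner, h, winner_self]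

theorem hasQHM_presBinf {n : ℕ} (hn : 3 ≤ n) : HasQHM PresBinf n :=
  HasQHM.monotone hn <| hasQHM_three_iff.2
    ⟨_, _, _, _, presBinf_proj 0, presBinf_leftWinner, presBinf_rightWinner, presBinf_proj 2,
      qhm3_winner⟩

theorem QHM.apply_zero_zero_one {n : ℕ} {p : Fin (n + 1) → Op 3} (h : QHM p)
    (hp : ∀ i, Preserves (p i) C3rel ∧ Preserves (p i) le2rel) (i : Fin (n + 1)) :
    p i ![0, 0, 1] = 0 := by
  obtain ⟨first_eq, -, step⟩ := h
  induction i using Fin.induction with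
  | zero =>
    calc p 0 ![0, 0, 1] = p 0 ![0, 0, 0] := first_eq 0 0 1
      _ = p 0 0 := by congr 1; decide
      _ = 0 := map_zero_of_preserves (hp 0).1 (hp 0).2
  | succ i ih =>
    refine Fin.le_zero_iff.1 ?_
    calc p i.succ ![0, 0, 1] ≤ p i.succ ![0, 1, 1] :=
          (preserves_le2rel_iff.1 (hp _).2 _ _ (fun i => by decide +revert)
            (fun i => by decide +revert)).1
      _ = p i.castSucc ![0, 0, 1] := (step i 0 1).symm
      _ = 0 := ih

theorem not_hasQHM_preserves_C3rel_le2rel (n : ℕ) :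
    ¬ HasQHM (fun f => Preserves f C3rel ∧ Preserves f le2rel) n := by
  rintro ⟨p, hp, h⟩
  have last_eq_one : p (Fin.last n) ![0, 0, 1] = 1 :=
    calc p (Fin.last n) ![0, 0, 1] = p (Fin.last n) ![1, 1, 1] := h.2.1 0 0 1
      _ = p (Fin.last n) 1 := by congr 1; decide
      _ = 1 := map_one_of_preserves (hp _).1 (hp _).2
  exact zero_ne_one ((h.apply_zero_zero_one hp _).symm.trans last_eq_one)

theorem stmt19_general :
    (∀ n, 3 ≤ n → HasQHM PresBinf n) ∧
    ∀ n, ¬ HasQHM (fun f => Preserves f C3rel ∧ Preserves f le2rel) n :=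
  ⟨fun _ => hasQHM_presBinf, not_hasQHM_preserves_C3rel_le2rel⟩

/-- `QHM(3)` holds in `B_∞` but not in `M₂`. -/
theorem stmt19 :
    (∃ p0 p1 p2 p3 : Op 3, PresBinf p0 ∧ PresBinf p1 ∧ PresBinf p2 ∧ PresBinf p3 ∧
      QHM3 p0 p1 p2 p3) ∧
    ¬ (∃ p0 p1 p2 p3 : Op 3, PresM2 p0 ∧ PresM2 p1 ∧ PresM2 p2 ∧ PresM2 p3 ∧
      QHM3 p0 p1 p2 p3) := by
  exact ⟨hasQHM_three_iff.1 (stmt19_general.1 3 le_rfl), fun h => stmt19_general.2 3 <|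
    (hasQHM_three_iff.2 h).imp fun _ hf => ⟨hf.1, hf.2.1⟩⟩
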